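/- (Carey.) Let H₀ be self-adjoint in the complex separable Hilbert space H and K ∈ B₂(H) Hilbert–Schmidt, and let Ξ(λ) be the spectral shift operator associated with Φ(z) = I_H + K*(H₀ − z)⁻¹K, i.e., the a.e.-defined family with 0 ≤ Ξ(λ) ∈ B₁(H), ‖Ξ(·)‖_{B₁} ∈ L¹(ℝ; dλ), and log(Φ(z)) = ∫_ℝ dλ Ξ(λ)(λ − z)⁻¹ for z ∈ ℂ∖ℝ. Then K*K = ∫_ℝ dλ Ξ(λ), the integral converging in the weak sense (the quadratic forms coincide: ‖Kf‖² = ∫_ℝ dλ (f, Ξ(λ) f) for all f ∈ H). In particular, for any nonnegative trace class V, choosing K = V^{1/2} reconstructs V = ∫_ℝ dλ Ξ(λ). -/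

import Mathlib

open Complex Filter MeasureTheory TopologicalSpace ContinuousLinearMap
open scoped InnerProductSpace Topology

noncomputable section

namespace SpectralShift

variable {H : Type*} [NormedAddCommGroup H] [InnerProductSpace ℂ H] [CompleteSpace H]

/-- The imaginary part `(T - T*)/(2i)` of a bounded operator. -/
def imPart (T : H →L[ℂ] H) : H →L[ℂ] H :=
  ((2 * Complex.I)⁻¹ : ℂ) • (T - ContinuousLinearMap.adjoint T)

/-- An operator-valued Herglotz function: analytic on the open upper half-plane with
nonnegative imaginary part there. -/
def IsHerglotz (M : ℂ → H →L[ℂ] H) : Prop :=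
  DifferentiableOn ℂ M {z : ℂ | 0 < z.im} ∧ ∀ z : ℂ, 0 < z.im → (imPart (M z)).IsPositive

/-- The integrand `(T + iλ)⁻¹ - (1 + iλ)⁻¹ I` in the integral representation of `log T`. -/
def logIntegrand (T : H →L[ℂ] H) (t : ℝ) : H →L[ℂ] H :=
  Ring.inverse (T + ((t : ℂ) * Complex.I) • (1 : H →L[ℂ] H)) -
    (((1 : ℂ) + (t : ℂ) * Complex.I)⁻¹) • (1 : H →L[ℂ] H)

/-- `log T = -i ∫₀^∞ ((T + iλ)⁻¹ - (1 + iλ)⁻¹ I) dλ` as a norm-convergent improper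
Riemann integral, for a dissipative boundedly invertible `T`. -/
def opLog (T : H →L[ℂ] H) : H →L[ℂ] H :=
  limUnder atTop (fun R : ℝ => (-Complex.I) • ∫ t in (0:ℝ)..R, logIntegrand T t)

/-- The logarithm `log S = (log S*)*` of an operator `S` with `-S` dissipative. -/
def opLogAnti (T : H →L[ℂ] H) : H →L[ℂ] H :=
  ContinuousLinearMap.adjoint (opLog (ContinuousLinearMap.adjoint T))

/-- The logarithm of a Herglotz-type operator family on `ℂ ∖ ℝ`, using `log T` in the
upper half-plane and the convention `log S = (log S*)*` in the lower half-plane. -/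
def logHerg (Φ : ℂ → H →L[ℂ] H) (z : ℂ) : H →L[ℂ] H :=
  if 0 < z.im then opLog (Φ z) else opLogAnti (Φ z)

/-- The logarithm of an anti-Herglotz-type operator family on `ℂ ∖ ℝ` (nonpositive
imaginary part in the upper half-plane). -/
def logAntiHerg (Φ : ℂ → H →L[ℂ] H) (z : ℂ) : H →L[ℂ] H :=
  if 0 < z.im then opLogAnti (Φ z) else opLog (Φ z)

/-- Trace class: absolute summability of the diagonal in every Hilbert basis. -/
def IsTraceClass (T : H →L[ℂ] H) : Prop :=
  ∀ (w : Set H) (b : HilbertBasis w ℂ H), Summable fun i => ‖⟪(b i : H), T (b i)⟫_ℂ‖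

/-- The trace, computed in a fixed Hilbert basis (basis-independent for trace
class operators). -/
def trH (T : H →L[ℂ] H) : ℂ :=
  ∑' i, ⟪((exists_hilbertBasis ℂ H).choose_spec.choose i : H),
    T ((exists_hilbertBasis ℂ H).choose_spec.choose i)⟫_ℂ

/-- The trace norm, via duality with bounded operators (the correct value for trace
class operators). -/
def traceNorm (T : H →L[ℂ] H) : ℝ :=
  ⨆ B : {B : H →L[ℂ] H // ‖B‖ ≤ 1}, ‖trH (T * (B : H →L[ℂ] H))‖

/-- Hilbert-Schmidt operators. -/
def IsHilbertSchmidt (K : H →L[ℂ] H) : Prop :=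
  ∀ (w : Set H) (b : HilbertBasis w ℂ H), Summable fun i => ‖K (b i)‖ ^ 2

/-- A (possibly unbounded) self-adjoint operator in `H`: a densely defined symmetric
operator possessing everywhere-defined bounded resolvents at every non-real point. -/
structure SelfAdjointOp (H : Type*) [NormedAddCommGroup H] [InnerProductSpace ℂ H]
    [CompleteSpace H] where
  dom : Submodule ℂ H
  dense_dom : Dense (dom : Set H)
  op : dom →ₗ[ℂ] H
  symmetric : ∀ x y : dom, ⟪op x, (y : H)⟫_ℂ = ⟪(x : H), op y⟫_ℂ
  resolvent : ℂ → H →L[ℂ] H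
  resolvent_mem : ∀ {z : ℂ}, z.im ≠ 0 → ∀ x : H, resolvent z x ∈ dom
  op_resolvent : ∀ {z : ℂ} (hz : z.im ≠ 0) (x : H),
    op ⟨resolvent z x, resolvent_mem hz x⟩ - z • resolvent z x = x
  resolvent_op : ∀ {z : ℂ} (hz : z.im ≠ 0) (x : dom),
    resolvent z (op x - z • (x : H)) = x

/-- `B = A + V` for a bounded operator `V` (with `dom B = dom A`). -/
def IsSumOf (B A : SelfAdjointOp H) (V : H →L[ℂ] H) : Prop :=
  B.dom = A.dom ∧ ∀ (x : H) (hxB : x ∈ B.dom) (hxA : x ∈ A.dom),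
    B.op ⟨x, hxB⟩ = A.op ⟨x, hxA⟩ + V x

/-- `R` is the (bounded, everywhere defined) resolvent `(A - z)⁻¹` of `A` at `z`. -/
def SelfAdjointOp.IsResolventAt (A : SelfAdjointOp H) (z : ℂ) (R : H →L[ℂ] H) : Prop :=
  (∀ x : H, R x ∈ A.dom) ∧
  (∀ (x : H) (hx : R x ∈ A.dom), A.op ⟨R x, hx⟩ - z • R x = x) ∧
  (∀ x : A.dom, R (A.op x - z • (x : H)) = x)

/-- `E` is the projection-valued spectral measure of the self-adjoint operator `A`. -/
def IsSpectralMeasure (A : SelfAdjointOp H) (E : Set ℝ → H →L[ℂ] H) : Prop :=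
  (∀ B : Set ℝ, MeasurableSet B → IsSelfAdjoint (E B)) ∧
  (∀ B C : Set ℝ, MeasurableSet B → MeasurableSet C → E B * E C = E (B ∩ C)) ∧
  (E Set.univ = 1) ∧
  (∀ (f : ℕ → Set ℝ), (∀ n, MeasurableSet (f n)) → Pairwise (Function.onFun Disjoint f) →
    ∀ x : H, HasSum (fun n => E (f n) x) (E (⋃ n, f n) x)) ∧
  ∃ μ : H → Measure ℝ,
    (∀ (f : H) (B : Set ℝ), MeasurableSet B → μ f B = ENNReal.ofReal (⟪f, E B f⟫_ℂ).re) ∧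
    ∀ (z : ℂ), z.im ≠ 0 → ∀ f : H,
      ⟪f, A.resolvent z f⟫_ℂ = ∫ l : ℝ, ((l : ℂ) - z)⁻¹ ∂(μ f)

/-- Invertibility of `T` restricted to the range of the orthogonal projection `P`
(for `T` commuting with `P`), with inverse `S` supported in `ran P`. -/
def InvertibleOn (T P : H →L[ℂ] H) : Prop :=
  ∃ S : H →L[ℂ] H, S * P = S ∧ P * S = S ∧ S * (T * P) = P ∧ (P * T) * S = P

/-- The spectral projection `J₊ = (I + J)/2` onto `H₊` for a self-adjoint unitary `J`. -/
def Jplus (J : H →L[ℂ] H) : H →L[ℂ] H := ((2 : ℂ)⁻¹) • (1 + J)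

/-- The spectral projection `J₋ = (I - J)/2` onto `H₋` for a self-adjoint unitary `J`. -/
def Jminus (J : H →L[ℂ] H) : H →L[ℂ] H := ((2 : ℂ)⁻¹) • (1 - J)

/-- `Φ₊(z) = I + J₊ K* (H₀ - z)⁻¹ K J₊`, the operator on `H` inducing `Φ₊(z)` on `H₊`
(and the identity on `H₋`). -/
def PhiPlus (H0 : SelfAdjointOp H) (J K : H →L[ℂ] H) (z : ℂ) : H →L[ℂ] H :=
  1 + Jplus J * (ContinuousLinearMap.adjoint K * H0.resolvent z * K) * Jplus J

/-- `Φ̃₋(z) = I - J₋ K* (H₊ - z)⁻¹ K J₋`, the operator on `H` inducing `Φ̃₋(z)` on `H₋`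
(and the identity on `H₊`). -/
def PhiMinusT (Hp : SelfAdjointOp H) (J K : H →L[ℂ] H) (z : ℂ) : H →L[ℂ] H :=
  1 - Jminus J * (ContinuousLinearMap.adjoint K * Hp.resolvent z * K) * Jminus J

/-!
Let `z = iy` with `y → ∞`. Since `-z (H₀ - z)⁻¹ → 1` strongly and `log (1 + A) = A + O(‖A‖²)`, the
left side of the representation of `log Φ` satisfies `-z ⟨f, log Φ(z) f⟩ → ⟨f, K*K f⟩ = ‖K f‖²`.
The right side, multiplied by `-z`, has real part `∫ y² / (λ² + y²) ⟨f, Ξ(λ) f⟩ dλ`. Because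
`⟨f, Ξ(λ) f⟩ ≥ 0`, Fatou's lemma makes it integrable, and dominated convergence then identifies the
limit as `∫ ⟨f, Ξ(λ) f⟩ dλ`.
-/

section WeightedIntegrals

variable {α ι : Type*} [MeasurableSpace α] {μ : Measure α} {u : Filter ι}
  {w : ι → α → ℝ} {φ : α → ℝ} {L : ℝ}

theorem integrable_of_tendsto_integral_mul [u.NeBot] [u.IsCountablyGenerated]
    (hφ : 0 ≤ᵐ[μ] φ) (hφm : AEMeasurable φ μ) (hwm : ∀ i, AEMeasurable (w i) μ)
    (hw : ∀ i x, 0 ≤ w i x) (hw_lim : ∀ x, Tendsto (w · x) u (𝓝 1))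
    (hint : ∀ᶠ i in u, Integrable (fun x => w i x * φ x) μ)
    (hlim : Tendsto (fun i => ∫ x, w i x * φ x ∂μ) u (𝓝 L)) :
    Integrable φ μ := by
  have hlim_φ (x : α) :
      liminf (fun i => ENNReal.ofReal (w i x * φ x)) u = ENNReal.ofReal (φ x) := by
    simpa only [one_mul] using (ENNReal.tendsto_ofReal ((hw_lim x).mul_const (φ x))).liminf_eq
  have hlim_lintegral :
      Tendsto (fun i => ∫⁻ x, ENNReal.ofReal (w i x * φ x) ∂μ) u (𝓝 (ENNReal.ofReal L)) := by
    refine (ENNReal.tendsto_ofReal hlim).congr' ?_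
    filter_upwards [hint] with i hi
    exact ofReal_integral_eq_lintegral_ofReal hi (hφ.mono fun x hx => mul_nonneg (hw i x) hx)
  refine ⟨hφm.aestronglyMeasurable, (hasFiniteIntegral_iff_ofReal hφ).2 ?_⟩
  calc ∫⁻ x, ENNReal.ofReal (φ x) ∂μ
      = ∫⁻ x, liminf (fun i => ENNReal.ofReal (w i x * φ x)) u ∂μ := by simp only [hlim_φ]
    _ ≤ liminf (fun i => ∫⁻ x, ENNReal.ofReal (w i x * φ x) ∂μ) u :=
        lintegral_liminf_le' fun i => ((hwm i).mul hφm).ennreal_ofReal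
    _ = ENNReal.ofReal L := hlim_lintegral.liminf_eq
    _ < ⊤ := ENNReal.ofReal_lt_top

theorem tendsto_integral_mul_of_tendsto_one [u.IsCountablyGenerated]
    (hφ : Integrable φ μ) (hwm : ∀ i, AEMeasurable (w i) μ) (hw : ∀ i x, ‖w i x‖ ≤ 1)
    (hw_lim : ∀ x, Tendsto (w · x) u (𝓝 1)) :
    Tendsto (fun i => ∫ x, w i x * φ x ∂μ) u (𝓝 (∫ x, φ x ∂μ)) := by
  refine tendsto_integral_filter_of_dominated_convergence (fun x => ‖φ x‖)
    (.of_forall fun i => ((hwm i).mul hφ.aemeasurable).aestronglyMeasurable)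
    (.of_forall fun i => ae_of_all _ fun x => ?_) hφ.norm
    (ae_of_all _ fun x => by simpa only [one_mul] using (hw_lim x).mul_const (φ x))
  rw [norm_mul]
  exact mul_le_of_le_one_left (norm_nonneg _) (hw i x)

end WeightedIntegrals

section CauchyTransform

/-- The Poisson kernel of the upper half-plane at height `y`, multiplied by `π * y` so that it
tends to `1` as `y → ∞`. -/
def poissonWeight (y l : ℝ) : ℝ := y ^ 2 / (l ^ 2 + y ^ 2)

theorem measurable_poissonWeight (y : ℝ) : Measurable (poissonWeight y) := by
  unfold poissonWeight
  fun_prop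

theorem poissonWeight_nonneg (y l : ℝ) : 0 ≤ poissonWeight y l := by
  unfold poissonWeight
  positivity

theorem norm_poissonWeight_le_one (y l : ℝ) : ‖poissonWeight y l‖ ≤ 1 := by
  rw [Real.norm_of_nonneg (poissonWeight_nonneg y l)]
  exact div_le_one_of_le₀ (le_add_of_nonneg_left (sq_nonneg l)) (by positivity)

theorem tendsto_poissonWeight_atTop (l : ℝ) :
    Tendsto (fun y => poissonWeight y l) atTop (𝓝 1) := by
  have h : Tendsto (fun y : ℝ => 1 - l ^ 2 / (l ^ 2 + y ^ 2)) atTop (𝓝 (1 - 0)) :=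
    (Tendsto.const_div_atTop (tendsto_atTop_add_const_left _ _ (tendsto_pow_atTop two_ne_zero))
      _).const_sub 1
  rw [sub_zero] at h
  refine h.congr' ?_
  filter_upwards [eventually_gt_atTop 0] with y hy
  unfold poissonWeight
  field_simp
  ring

theorem re_neg_mul_inv_sub_eq_poissonWeight (y l : ℝ) :
    (-(y * I) * ((l : ℂ) - y * I)⁻¹).re = poissonWeight y l := by
  simp only [poissonWeight, neg_mul, neg_re, mul_re, ofReal_re, I_re, mul_zero, ofReal_im, I_im,
    mul_one, sub_self, zero_mul, inv_im, normSq_apply, sub_re, sub_im, mul_im, sub_zero, add_zero,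
    zero_sub, mul_neg, neg_neg]
  ring

variable {μ : Measure ℝ} {φ : ℝ → ℝ} {L : ℝ}

theorem aemeasurable_of_integrable_inv_sub_mul {z : ℂ} (hz : z.im ≠ 0)
    (h : Integrable (fun l : ℝ => ((l : ℂ) - z)⁻¹ * φ l) μ) : AEMeasurable φ μ := by
  have hcancel (l : ℝ) : (((l : ℂ) - z) * (((l : ℂ) - z)⁻¹ * φ l)).re = φ l := by
    have hne : (l : ℂ) - z ≠ 0 := fun h0 => hz (by simpa using congrArg im h0)
    rw [mul_inv_cancel_left₀ hne, ofReal_re]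
  refine AEMeasurable.congr (Complex.measurable_re.comp_aemeasurable
    ((by fun_prop : Measurable fun l : ℝ => (l : ℂ) - z).aemeasurable.mul h.aemeasurable))
    (ae_of_all _ hcancel)

theorem integrable_and_integral_eq_of_tendsto_cauchyTransform (hφ : 0 ≤ᵐ[μ] φ)
    (hint : ∀ y : ℝ, 0 < y → Integrable (fun l : ℝ => ((l : ℂ) - y * I)⁻¹ * φ l) μ)
    (hlim : Tendsto (fun y : ℝ => -(y * I) * ∫ l : ℝ, ((l : ℂ) - y * I)⁻¹ * φ l ∂μ)
      atTop (𝓝 (L : ℂ))) :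
    Integrable φ μ ∧ ∫ l, φ l ∂μ = L := by
  have hre (y l : ℝ) :
      (-(y * I) * (((l : ℂ) - y * I)⁻¹ * φ l)).re = poissonWeight y l * φ l := by
    rw [← mul_assoc, re_mul_ofReal, re_neg_mul_inv_sub_eq_poissonWeight]
  have hint_weight (y : ℝ) (hy : 0 < y) : Integrable (fun l => poissonWeight y l * φ l) μ := by
    simp only [← hre]
    exact ((hint y hy).const_mul (-(y * I))).re
  have hlim_weight : Tendsto (fun y => ∫ l, poissonWeight y l * φ l ∂μ) atTop (𝓝 L) := by
    refine ((continuous_re.tendsto _).comp hlim).congr' ?_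
    filter_upwards [eventually_gt_atTop 0] with y hy
    simp only [Function.comp_apply, ← integral_const_mul, ← hre]
    exact (integral_re ((hint y hy).const_mul (-(y * I)))).symm
  have hmeas (y : ℝ) : AEMeasurable (poissonWeight y) μ := (measurable_poissonWeight y).aemeasurable
  have hφm : AEMeasurable φ μ := aemeasurable_of_integrable_inv_sub_mul (by simp) (hint 1 one_pos)
  have hφi : Integrable φ μ :=
    integrable_of_tendsto_integral_mul hφ hφm hmeas poissonWeight_nonneg
      tendsto_poissonWeight_atTop ((eventually_gt_atTop 0).mono hint_weight) hlim_weight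
  exact ⟨hφi, tendsto_nhds_unique (tendsto_integral_mul_of_tendsto_one hφi hmeas
    norm_poissonWeight_le_one tendsto_poissonWeight_atTop) hlim_weight⟩

end CauchyTransform

section SelfAdjointResolvent

namespace SelfAdjointOp

variable (A : SelfAdjointOp H) {z : ℂ}

theorem im_inner_op_self (u : A.dom) : (⟪(u : H), A.op u⟫_ℂ).im = 0 := by
  rw [← conj_eq_iff_im, inner_conj_symm, A.symmetric]

theorem im_inner_resolvent (hz : z.im ≠ 0) (x : H) :
    (⟪A.resolvent z x, x⟫_ℂ).im = -(z.im * ‖A.resolvent z x‖ ^ 2) := by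
  have h_real := A.im_inner_op_self ⟨A.resolvent z x, A.resolvent_mem hz x⟩
  nth_rewrite 2 [← A.op_resolvent hz x]
  rw [inner_sub_right, inner_smul_right, inner_self_eq_norm_sq_to_K,
    RCLike.ofReal_eq_complex_ofReal, sub_im, h_real, zero_sub, ← ofReal_pow, im_mul_ofReal]

theorem norm_resolvent_le (hz : z.im ≠ 0) : ‖A.resolvent z‖ ≤ |z.im|⁻¹ := by
  refine opNorm_le_bound _ (by positivity) fun x => ?_
  rw [← div_eq_inv_mul, le_div_iff₀' (abs_pos.2 hz)]
  rcases (norm_nonneg (A.resolvent z x)).eq_or_lt with h | h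
  · rw [← h, mul_zero]
    exact norm_nonneg x
  · refine le_of_mul_le_mul_left ?_ h
    calc ‖A.resolvent z x‖ * (|z.im| * ‖A.resolvent z x‖)
        = |(⟪A.resolvent z x, x⟫_ℂ).im| := by
          rw [A.im_inner_resolvent hz, abs_neg, abs_mul, abs_sq]
          ring
      _ ≤ ‖⟪A.resolvent z x, x⟫_ℂ‖ := abs_im_le_norm _
      _ ≤ ‖A.resolvent z x‖ * ‖x‖ := norm_inner_le_norm _ _

theorem isBigO_resolvent_mul_I :
    (fun y : ℝ => A.resolvent (y * I)) =O[atTop] fun y : ℝ => y⁻¹ := by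
  refine .of_bound 1 ?_
  filter_upwards [eventually_gt_atTop 0] with y hy
  have hz : ((y : ℂ) * I).im ≠ 0 := by simpa using hy.ne'
  simpa using A.norm_resolvent_le hz

theorem tendsto_resolvent_mul_I : Tendsto (fun y : ℝ => A.resolvent (y * I)) atTop (𝓝 0) :=
  A.isBigO_resolvent_mul_I.trans_tendsto tendsto_inv_atTop_zero

theorem equicontinuous_neg_smul_resolvent :
    Equicontinuous fun (y : ℝ) (x : H) => (-(y * I) : ℂ) • A.resolvent (y * I) x := by
  suffices h : ∃ C, ∀ y : ℝ, ‖(-(y * I) : ℂ) • A.resolvent (y * I)‖ ≤ C from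
    ((NormedSpace.equicontinuous_TFAE fun y : ℝ =>
      (-(y * I) : ℂ) • A.resolvent (y * I)).out 5 1).1 h
  refine ⟨1, fun y => ?_⟩
  rcases eq_or_ne y 0 with rfl | hy
  · simp
  · have hz : ((y : ℂ) * I).im ≠ 0 := by simpa using hy
    have hbound := A.norm_resolvent_le hz
    simpa [norm_smul, hy] using mul_le_mul_of_nonneg_left hbound (abs_nonneg y)

theorem tendsto_neg_smul_resolvent (x : H) :
    Tendsto (fun y : ℝ => (-(y * I) : ℂ) • A.resolvent (y * I) x) atTop (𝓝 x) := by
  -- On the domain, `-z (A - z)⁻¹ d = d - (A - z)⁻¹ A d`; equicontinuity and density do the rest.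
  refine (A.equicontinuous_neg_smul_resolvent x).tendsto_of_mem_closure
    continuousWithinAt_id (fun d hd => ?_) (A.dense_dom x)
  have h_op : Tendsto (fun y : ℝ => d - A.resolvent (y * I) (A.op ⟨d, hd⟩)) atTop (𝓝 d) := by
    simpa using (A.tendsto_resolvent_mul_I.eval_const (A.op ⟨d, hd⟩)).const_sub d
  refine h_op.congr' ?_
  filter_upwards [eventually_gt_atTop 0] with y hy
  have hz : ((y : ℂ) * I).im ≠ 0 := by simpa using hy.ne'
  have h := A.resolvent_op hz ⟨d, hd⟩
  rw [map_sub, map_smul, sub_eq_iff_eq_add] at h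
  rw [h, sub_add_cancel_left, neg_smul]

end SelfAdjointOp

end SelfAdjointResolvent

section BanachAlgebraResolvent

theorem smul_resolvent_eq_one_add {𝕜 𝔸 : Type*} [CommSemiring 𝕜] [Ring 𝔸] [Algebra 𝕜 𝔸] {a : 𝔸}
    {c : 𝕜} (h : c ∈ resolventSet 𝕜 a) : c • resolvent a c = 1 + a * resolvent a c := by
  have h_inv : (algebraMap 𝕜 𝔸 c - a) * resolvent a c = 1 := Ring.mul_inverse_cancel _ h
  rwa [sub_mul, ← Algebra.smul_def, sub_eq_iff_eq_add] at h_inv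

theorem resolvent_sub_inv_smul_one {𝕜 𝔸 : Type*} [Field 𝕜] [Ring 𝔸] [Algebra 𝕜 𝔸] {a : 𝔸} {c : 𝕜}
    (hc : c ≠ 0) (h : c ∈ resolventSet 𝕜 a) :
    resolvent a c - c⁻¹ • (1 : 𝔸) = c⁻¹ ^ 2 • (a + a * a * resolvent a c) := by
  have h_step : resolvent a c = c⁻¹ • (1 + a * resolvent a c) := by
    rw [← smul_resolvent_eq_one_add h, inv_smul_smul₀ hc]
  have h_mul : a * resolvent a c = c⁻¹ • (a + a * a * resolvent a c) := by
    conv_lhs => rw [h_step, mul_smul_comm, mul_add, mul_one, ← mul_assoc]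
  rw [sub_eq_iff_eq_add', sq, mul_smul, ← h_mul, ← smul_add, ← h_step]

theorem norm_sub_norm_mul_norm_resolvent_le {𝕜 𝔸 : Type*} [NormedField 𝕜] [NormedRing 𝔸]
    [NormedAlgebra 𝕜 𝔸] {a : 𝔸} {c : 𝕜} (h : c ∈ resolventSet 𝕜 a) :
    (‖c‖ - ‖a‖) * ‖resolvent a c‖ ≤ ‖(1 : 𝔸)‖ := by
  have h_norm : ‖c‖ * ‖resolvent a c‖ ≤ ‖(1 : 𝔸)‖ + ‖a‖ * ‖resolvent a c‖ := by
    rw [← norm_smul, smul_resolvent_eq_one_add h]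
    exact (norm_add_le _ _).trans (by gcongr; exact norm_mul_le _ _)
  linarith

end BanachAlgebraResolvent

section LogarithmNearOne

theorem one_le_norm_one_add_mul_I (t : ℝ) : 1 ≤ ‖(1 : ℂ) + t * I‖ := by
  simpa using abs_re_le_norm ((1 : ℂ) + t * I)

theorem one_add_mul_I_ne_zero (t : ℝ) : (1 : ℂ) + t * I ≠ 0 :=
  norm_pos_iff.1 (one_pos.trans_le (one_le_norm_one_add_mul_I t))

theorem norm_inv_one_add_mul_I_sq (t : ℝ) : ‖((1 : ℂ) + t * I)⁻¹ ^ 2‖ = (1 + t ^ 2)⁻¹ := by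
  have h : ‖(1 : ℂ) + t * I‖ = √(1 ^ 2 + t ^ 2) := by simpa using norm_add_mul_I 1 t
  rw [norm_pow, norm_inv, inv_pow, h, Real.sq_sqrt (by positivity), one_pow]

theorem continuous_inv_one_add_mul_I : Continuous fun t : ℝ => ((1 : ℂ) + t * I)⁻¹ :=
  Continuous.inv₀ (by fun_prop) one_add_mul_I_ne_zero

theorem integrable_inv_one_add_mul_I_sq : Integrable fun t : ℝ => ((1 : ℂ) + t * I)⁻¹ ^ 2 :=
  integrable_inv_one_add_sq.mono' (continuous_inv_one_add_mul_I.pow 2).aestronglyMeasurable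
    (ae_of_all _ fun t => (norm_inv_one_add_mul_I_sq t).le)

theorem integral_Ioi_inv_one_add_mul_I_sq :
    ∫ t in Set.Ioi (0 : ℝ), ((1 : ℂ) + t * I)⁻¹ ^ 2 = -I := by
  have h_deriv (t : ℝ) :
      HasDerivAt (fun t : ℝ => I * ((1 : ℂ) + t * I)⁻¹) (((1 : ℂ) + t * I)⁻¹ ^ 2) t := by
    have h := (((hasDerivAt_id t).ofReal_comp.mul_const I).const_add 1).inv
      (one_add_mul_I_ne_zero t) |>.const_mul I
    refine h.congr_deriv ?_
    simp only [id_eq, ofReal_one, one_mul]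
    rw [mul_div_assoc', mul_neg, I_mul_I, neg_neg, one_div, inv_pow]
  have h_norm : Tendsto (fun t : ℝ => ‖(1 : ℂ) + t * I‖) atTop atTop :=
    tendsto_atTop_mono (fun t => (le_abs_self t).trans
      (by simpa using abs_im_le_norm ((1 : ℂ) + t * I))) tendsto_id
  have h_lim : Tendsto (fun t : ℝ => I * ((1 : ℂ) + t * I)⁻¹) atTop (𝓝 0) := by
    simpa using
      (tendsto_inv₀_cobounded.comp (tendsto_norm_atTop_iff_cobounded.1 h_norm)).const_mul I
  rw [integral_Ioi_of_hasDerivAt_of_tendsto' (fun t _ => h_deriv t)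
    integrable_inv_one_add_mul_I_sq.integrableOn h_lim]
  simp

/-- The part of `logIntegrand (1 + A) t` that is of second order in `A`, for `‖A‖ < 1`. -/
def logRemainder (A : H →L[ℂ] H) (t : ℝ) : H →L[ℂ] H :=
  ((1 : ℂ) + t * I)⁻¹ ^ 2 • (A * A * resolvent (-A) ((1 : ℂ) + t * I))

variable {A : H →L[ℂ] H}

theorem one_add_mul_I_mem_resolventSet_neg (hA : ‖A‖ < 1) (t : ℝ) :
    (1 : ℂ) + t * I ∈ resolventSet ℂ (-A) := by
  refine spectrum.mem_resolventSet_of_norm_lt_mul ?_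
  calc ‖-A‖ * ‖(1 : H →L[ℂ] H)‖ ≤ ‖A‖ := by
        rw [norm_neg]
        exact mul_le_of_le_one_right (norm_nonneg A) norm_id_le
    _ < ‖(1 : ℂ) + t * I‖ := hA.trans_le (one_le_norm_one_add_mul_I t)

theorem logIntegrand_one_add (hA : ‖A‖ < 1) (t : ℝ) :
    logIntegrand (1 + A) t = -(((1 : ℂ) + t * I)⁻¹ ^ 2 • A) + logRemainder A t := by
  calc logIntegrand (1 + A) t
      = resolvent (-A) ((1 : ℂ) + t * I) - ((1 : ℂ) + t * I)⁻¹ • (1 : H →L[ℂ] H) := by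
        rw [logIntegrand, resolvent, Algebra.algebraMap_eq_smul_one, add_smul, one_smul,
          sub_neg_eq_add, add_right_comm]
    _ = -(((1 : ℂ) + t * I)⁻¹ ^ 2 • A) + logRemainder A t := by
        rw [resolvent_sub_inv_smul_one (one_add_mul_I_ne_zero t)
          (one_add_mul_I_mem_resolventSet_neg hA t), smul_add, smul_neg, neg_mul_neg, logRemainder]

theorem norm_resolvent_neg_one_add_mul_I_le (hA : ‖A‖ < 1) (t : ℝ) :
    ‖resolvent (-A) ((1 : ℂ) + t * I)‖ ≤ (1 - ‖A‖)⁻¹ := by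
  rw [← one_div, le_div_iff₀' (sub_pos.2 hA)]
  calc (1 - ‖A‖) * ‖resolvent (-A) ((1 : ℂ) + t * I)‖
      ≤ (‖(1 : ℂ) + t * I‖ - ‖-A‖) * ‖resolvent (-A) ((1 : ℂ) + t * I)‖ := by
        rw [norm_neg]
        gcongr
        exact one_le_norm_one_add_mul_I t
    _ ≤ ‖(1 : H →L[ℂ] H)‖ :=
        norm_sub_norm_mul_norm_resolvent_le (one_add_mul_I_mem_resolventSet_neg hA t)
    _ ≤ 1 := norm_id_le

theorem norm_logRemainder_le (hA : ‖A‖ < 1) (t : ℝ) :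
    ‖logRemainder A t‖ ≤ ‖A‖ ^ 2 / (1 - ‖A‖) * (1 + t ^ 2)⁻¹ := by
  have h_norm : ‖A * A * resolvent (-A) ((1 : ℂ) + t * I)‖ ≤ ‖A‖ ^ 2 / (1 - ‖A‖) :=
    calc ‖A * A * resolvent (-A) ((1 : ℂ) + t * I)‖
        ≤ ‖A‖ * ‖A‖ * ‖resolvent (-A) ((1 : ℂ) + t * I)‖ := norm_mul₃_le
      _ ≤ ‖A‖ * ‖A‖ * (1 - ‖A‖)⁻¹ := by
          gcongr
          exact norm_resolvent_neg_one_add_mul_I_le hA t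
      _ = ‖A‖ ^ 2 / (1 - ‖A‖) := by rw [sq, div_eq_mul_inv]
  rw [logRemainder, norm_smul, norm_inv_one_add_mul_I_sq, mul_comm]
  gcongr

theorem continuous_logRemainder (hA : ‖A‖ < 1) : Continuous (logRemainder A) := by
  have h_resolvent : Continuous fun t : ℝ => resolvent (-A) ((1 : ℂ) + t * I) :=
    continuous_iff_continuousAt.2 fun t =>
      (spectrum.hasDerivAt_resolvent_const_left
        (one_add_mul_I_mem_resolventSet_neg hA t)).continuousAt.comp'
        (f := fun t : ℝ => (1 : ℂ) + t * I) (by fun_prop)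
  exact (continuous_inv_one_add_mul_I.pow 2).smul (continuous_const.mul h_resolvent)

theorem integrable_logRemainder (hA : ‖A‖ < 1) : Integrable (logRemainder A) :=
  (integrable_inv_one_add_sq.const_mul _).mono' (continuous_logRemainder hA).aestronglyMeasurable
    (ae_of_all _ (norm_logRemainder_le hA))

theorem opLog_one_add (hA : ‖A‖ < 1) :
    opLog (1 + A) = A + (-I) • ∫ t in Set.Ioi (0 : ℝ), logRemainder A t := by
  have h_eq : logIntegrand (1 + A) =
      fun t : ℝ => -(((1 : ℂ) + t * I)⁻¹ ^ 2 • A) + logRemainder A t :=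
    funext (logIntegrand_one_add hA)
  have h_linear : Integrable fun t : ℝ => -(((1 : ℂ) + t * I)⁻¹ ^ 2 • A) :=
    (integrable_inv_one_add_mul_I_sq.smul_const A).neg
  have h_int : Integrable (logIntegrand (1 + A)) :=
    h_eq ▸ h_linear.add (integrable_logRemainder hA)
  have h_integral : ∫ t in Set.Ioi (0 : ℝ), logIntegrand (1 + A) t =
      I • A + ∫ t in Set.Ioi (0 : ℝ), logRemainder A t := by
    rw [h_eq, integral_add h_linear.integrableOn (integrable_logRemainder hA).integrableOn,
      integral_neg, integral_smul_const, integral_Ioi_inv_one_add_mul_I_sq, neg_smul, neg_neg]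
  calc opLog (1 + A) = (-I) • ∫ t in Set.Ioi (0 : ℝ), logIntegrand (1 + A) t :=
        ((intervalIntegral_tendsto_integral_Ioi 0 h_int.integrableOn
          tendsto_id).const_smul (-I)).limUnder_eq
    _ = A + (-I) • ∫ t in Set.Ioi (0 : ℝ), logRemainder A t := by
        rw [h_integral, smul_add, smul_smul, neg_mul, I_mul_I, neg_neg, one_smul]

theorem norm_opLog_one_add_sub_le (hA : ‖A‖ < 1) :
    ‖opLog (1 + A) - A‖ ≤ ‖A‖ ^ 2 / (1 - ‖A‖) * (Real.pi / 2) := by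
  rw [opLog_one_add hA, add_sub_cancel_left, norm_smul, norm_neg, norm_I, one_mul]
  calc ‖∫ t in Set.Ioi (0 : ℝ), logRemainder A t‖
      ≤ ∫ t in Set.Ioi (0 : ℝ), ‖A‖ ^ 2 / (1 - ‖A‖) * (1 + t ^ 2)⁻¹ :=
        norm_integral_le_of_norm_le (integrable_inv_one_add_sq.const_mul _).integrableOn
          (ae_of_all _ (norm_logRemainder_le hA))
    _ = ‖A‖ ^ 2 / (1 - ‖A‖) * (Real.pi / 2) := by
        rw [integral_const_mul, integral_Ioi_inv_one_add_sq, Real.arctan_zero, sub_zero]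

theorem isLittleO_opLog_one_add_sub :
    (fun A : H →L[ℂ] H => opLog (1 + A) - A) =o[𝓝 0] fun A => A := by
  have h_sq : (fun A : H →L[ℂ] H => opLog (1 + A) - A) =O[𝓝 0] fun A => ‖A‖ ^ 2 := by
    refine .of_bound Real.pi ?_
    filter_upwards [Metric.ball_mem_nhds 0 one_half_pos] with A hA
    rw [mem_ball_zero_iff] at hA
    calc ‖opLog (1 + A) - A‖ ≤ ‖A‖ ^ 2 / (1 - ‖A‖) * (Real.pi / 2) :=
          norm_opLog_one_add_sub_le (by linarith)
      _ ≤ ‖A‖ ^ 2 / (1 / 2) * (Real.pi / 2) := by gcongr; linarith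
      _ = Real.pi * ‖‖A‖ ^ 2‖ := by rw [norm_pow, norm_norm]; ring
  exact h_sq.trans_isLittleO (Asymptotics.isLittleO_norm_pow_id one_lt_two)

end LogarithmNearOne

section Reconstruction

variable {E : Type*} [NormedAddCommGroup E] [InnerProductSpace ℂ E] [CompleteSpace E]

/-- The operator `K* (A - z)⁻¹ K`, so that `Φ(z) = 1 + sandwichedResolvent A K z`. -/
def sandwichedResolvent (A : SelfAdjointOp H) (K : E →L[ℂ] H) (z : ℂ) : E →L[ℂ] E :=
  adjoint K ∘L A.resolvent z ∘L K

variable (A : SelfAdjointOp H) (K : E →L[ℂ] H)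

theorem isBigO_sandwichedResolvent_mul_I :
    (fun y : ℝ => sandwichedResolvent A K (y * I)) =O[atTop] fun y : ℝ => y⁻¹ := by
  refine (Asymptotics.IsBigO.of_bound (‖adjoint K‖ * ‖K‖) (.of_forall fun y => ?_)).trans
    A.isBigO_resolvent_mul_I
  calc ‖sandwichedResolvent A K (y * I)‖ ≤ ‖adjoint K‖ * (‖A.resolvent (y * I)‖ * ‖K‖) :=
        (opNorm_comp_le _ _).trans (by gcongr; exact opNorm_comp_le _ _)
    _ = ‖adjoint K‖ * ‖K‖ * ‖A.resolvent (y * I)‖ := by ring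

theorem tendsto_neg_smul_sandwichedResolvent (f : E) :
    Tendsto (fun y : ℝ => (-(y * I) : ℂ) • sandwichedResolvent A K (y * I) f) atTop
      (𝓝 (adjoint K (K f))) := by
  simpa [sandwichedResolvent, Function.comp_def] using
    ((adjoint K).continuous.tendsto _).comp (A.tendsto_neg_smul_resolvent (K f))

theorem tendsto_neg_smul_opLog_sub_sandwichedResolvent :
    Tendsto (fun y : ℝ => (-(y * I) : ℂ) •
      (opLog (1 + sandwichedResolvent A K (y * I)) - sandwichedResolvent A K (y * I)))
      atTop (𝓝 0) := by
  have h_bigO := isBigO_sandwichedResolvent_mul_I A K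
  have h_littleO : (fun y : ℝ => opLog (1 + sandwichedResolvent A K (y * I)) -
      sandwichedResolvent A K (y * I)) =o[atTop] fun y : ℝ => y⁻¹ :=
    (isLittleO_opLog_one_add_sub.comp_tendsto
      (h_bigO.trans_tendsto tendsto_inv_atTop_zero)).trans_isBigO h_bigO
  have h_linear : (fun y : ℝ => (-(y * I) : ℂ)) =O[atTop] fun y : ℝ => y :=
    .of_bound 1 (.of_forall fun y => by simp)
  refine (Asymptotics.isLittleO_one_iff ℝ).1 ((h_linear.smul_isLittleO h_littleO).trans_isBigO ?_)
  refine .of_bound 1 ?_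
  filter_upwards [eventually_ne_atTop 0] with y hy
  simp [hy]

theorem tendsto_neg_smul_opLog (f : E) :
    Tendsto (fun y : ℝ => (-(y * I) : ℂ) • opLog (1 + sandwichedResolvent A K (y * I)) f) atTop
      (𝓝 (adjoint K (K f))) := by
  have h := ((tendsto_neg_smul_opLog_sub_sandwichedResolvent A K).eval_const f).add
    (tendsto_neg_smul_sandwichedResolvent A K f)
  simpa only [smul_apply, sub_apply, ← smul_add, sub_add_cancel, zero_apply, zero_add] using h

theorem tendsto_neg_mul_inner_logHerg (f : E) :
    Tendsto (fun y : ℝ => -(y * I) *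
        ⟪f, logHerg (fun w => 1 + sandwichedResolvent A K w) (y * I) f⟫_ℂ) atTop
      (𝓝 ((‖K f‖ ^ 2 : ℝ) : ℂ)) := by
  have h := (tendsto_const_nhds (x := f)).inner (𝕜 := ℂ) (tendsto_neg_smul_opLog A K f)
  rw [adjoint_inner_right, inner_self_eq_norm_sq_to_K, RCLike.ofReal_eq_complex_ofReal,
    ← ofReal_pow] at h
  refine h.congr' ?_
  filter_upwards [eventually_gt_atTop 0] with y hy
  rw [inner_smul_right, logHerg, if_pos (by simpa using hy)]

theorem carey_reconstruction_general {μ : Measure ℝ} {Ξ : ℝ → E →L[ℂ] E}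
    (hpos : ∀ᵐ l ∂μ, (Ξ l).IsPositive)
    (hrep : ∀ z : ℂ, 0 < z.im → ∀ f : E,
      Integrable (fun l : ℝ => ((l : ℂ) - z)⁻¹ * ⟪f, Ξ l f⟫_ℂ) μ ∧
      ⟪f, logHerg (fun w => 1 + sandwichedResolvent A K w) z f⟫_ℂ =
        ∫ l : ℝ, ((l : ℂ) - z)⁻¹ * ⟪f, Ξ l f⟫_ℂ ∂μ)
    (f : E) :
    Integrable (fun l : ℝ => (⟪f, Ξ l f⟫_ℂ).re) μ ∧
      ‖K f‖ ^ 2 = ∫ l : ℝ, (⟪f, Ξ l f⟫_ℂ).re ∂μ := by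
  have h_real (z : ℂ) : (fun l : ℝ => ((l : ℂ) - z)⁻¹ * ⟪f, Ξ l f⟫_ℂ) =ᵐ[μ]
      fun l : ℝ => ((l : ℂ) - z)⁻¹ * (⟪f, Ξ l f⟫_ℂ).re := by
    filter_upwards [hpos] with l hl
    exact congrArg _ (hl.isSymmetric.coe_re_inner_self_apply f).symm
  have h_nonneg : 0 ≤ᵐ[μ] fun l : ℝ => (⟪f, Ξ l f⟫_ℂ).re :=
    hpos.mono fun l hl => hl.re_inner_nonneg_right f
  have h_im {y : ℝ} (hy : 0 < y) : 0 < ((y : ℂ) * I).im := by simpa using hy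
  refine (integrable_and_integral_eq_of_tendsto_cauchyTransform h_nonneg
    (fun y hy => ((hrep _ (h_im hy) f).1.congr (h_real _))) ?_).imp_right Eq.symm
  refine (tendsto_neg_mul_inner_logHerg A K f).congr' ?_
  filter_upwards [eventually_gt_atTop 0] with y hy
  rw [← integral_congr_ae (h_real _), ← (hrep _ (h_im hy) f).2]

end Reconstruction

/-- Lemma 4.6 (Carey): `K*K = ∫_ℝ Ξ(λ) dλ` in the weak sense, i.e.
`‖Kf‖² = ∫_ℝ (f, Ξ(λ) f) dλ` for all `f ∈ H`, where `Ξ` is the spectral shift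
operator associated with `Φ(z) = I + K*(H₀-z)⁻¹K`. -/
theorem carey_reconstruction [SeparableSpace H]
    (H0 : SelfAdjointOp H) (K : H →L[ℂ] H) (hK : IsHilbertSchmidt K)
    (Ξ : ℝ → H →L[ℂ] H)
    (hmeas : ∀ f g : H, Measurable fun l : ℝ => ⟪f, Ξ l g⟫_ℂ)
    (hbd : ∀ᵐ l ∂(volume : Measure ℝ),
      (Ξ l).IsPositive ∧ ((1 : H →L[ℂ] H) - Ξ l).IsPositive ∧ IsTraceClass (Ξ l))
    (hL1 : Integrable fun l : ℝ => traceNorm (Ξ l))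
    (hrep : ∀ z : ℂ, z.im ≠ 0 → ∀ f g : H,
      Integrable (fun l : ℝ => ((l : ℂ) - z)⁻¹ * ⟪f, Ξ l g⟫_ℂ) ∧
      ⟪f, logHerg
          (fun w => 1 + ContinuousLinearMap.adjoint K * H0.resolvent w * K) z g⟫_ℂ =
        ∫ l : ℝ, ((l : ℂ) - z)⁻¹ * ⟪f, Ξ l g⟫_ℂ) :
    ∀ f : H,
      Integrable (fun l : ℝ => (⟪f, Ξ l f⟫_ℂ).re) ∧
      ‖K f‖ ^ 2 = ∫ l : ℝ, (⟪f, Ξ l f⟫_ℂ).re := by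
  exact carey_reconstruction_general H0 K (hbd.mono fun _ h => h.1) fun z hz f =>
    hrep z hz.ne' f f

end SpectralShift
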